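/- Let S = G ∪ N be a finite elementary semigroup, let T₂ be a nonempty sequence over N with σ(T₂) ≠ ∞_S, and let K = {g ∈ G : g + σ(T₂) = σ(T₂)} be the stabilizer of σ(T₂) in G. Then D(S) ≥ |T₂| + D(G/K), where G/K is the quotient group and D(G/K) its Davenport constant. -/

import Mathlib

/-!
Removing a subsequence `C` from `T` without changing the sum means `σ(T) + σ(C) = σ(T)`. Let
`T = T₂ + W` with `W` over `G`. The terms of `W` are cancellable, so `σ(T₂) + σ(C) = σ(T₂)`. A
nilpotent term in `C` would allow `σ(C)` to be added until the sum becomes the zero element, whereas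
`σ(T₂) ≠ ∞`; hence `C` is a subsequence of `W` and `σ(C)` stabilizes `σ(T₂)`. So as soon as
`|T₂| + |W| ≥ D(S)`, the image of `W` in `G/K` has a nonempty zero-sum subsequence.
-/

namespace EGZ

variable {S : Type}

/-- `rep a n = (n+1)·a`, the (n+1)-fold sum of `a` with itself (defined for semigroups,
where the 0-fold sum is unavailable). -/
def rep [AddCommSemigroup S] (a : S) : ℕ → S
  | 0 => a
  | n + 1 => rep a n + a

/-- The sum of all terms of a sequence (= multiset) over the semigroup `S`, computed in
`WithZero S` (i.e. `S` with an extra identity element `0` adjoined); the empty sequence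
has sum `0`, and a nonempty sequence has sum `↑s` where `s ∈ S` is its genuine sum. -/
def mSum [AddCommSemigroup S] (T : Multiset S) : WithZero S :=
  (T.map (fun s => (s : WithZero S))).sum

/-- `σ(A) = σ(B)`, with the paper's convention: the empty sequence is regarded as having
sum equal to the identity element `e` of `S`, whenever `S` has an identity element. -/
def EqSum [AddCommSemigroup S] (A B : Multiset S) : Prop :=
  mSum A = mSum B ∨
    ∃ e : S, (∀ a : S, e + a = a) ∧
      ((mSum A = 0 ∧ mSum B = (e : WithZero S)) ∨
        (mSum A = (e : WithZero S) ∧ mSum B = 0))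

/-- A sequence `T` over `S` is reducible if some proper subsequence `B` of `T`
satisfies `σ(B) = σ(T)`. -/
def Reducible [AddCommSemigroup S] (T : Multiset S) : Prop :=
  ∃ B : Multiset S, B < T ∧ EqSum B T

/-- The (large) Davenport constant `D(S)`: the smallest `ℓ` such that every sequence over
`S` of length at least `ℓ` is reducible. -/
noncomputable def DavC (S : Type) [AddCommSemigroup S] : ℕ :=
  sInf {ℓ : ℕ | ∀ T : Multiset S, ℓ ≤ Multiset.card T → Reducible T}

/-- The property defining the small Davenport constant: `ℓ` is admissible if for every `m`
and every `c₁, …, c_m ∈ S` there is `J ⊆ [1, m]` with `|J| ≤ ℓ` and `Σ_{j=1}^m c_j = Σ_{j∈J} c_j`. -/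
def SmallDavProp (S : Type) [AddCommSemigroup S] (ℓ : ℕ) : Prop :=
  ∀ (m : ℕ) (c : Fin m → S), ∃ J : Finset (Fin m),
    J.card ≤ ℓ ∧ EqSum (J.val.map c) ((Finset.univ : Finset (Fin m)).val.map c)

/-- The small Davenport constant `d(S)`. -/
noncomputable def smallDavC (S : Type) [AddCommSemigroup S] : ℕ :=
  sInf {ℓ : ℕ | SmallDavProp S ℓ}

/-- The period of an element `a ∈ S`: the least `t > 0` such that `r·a = (r+t)·a`
for some `r > 0`. -/
noncomputable def period [AddCommSemigroup S] (a : S) : ℕ :=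
  sInf {t : ℕ | 0 < t ∧ ∃ k : ℕ, rep a (k + t) = rep a k}

/-- `exp(S)`: the least common multiple of the periods of all elements of `S`. -/
noncomputable def expS (S : Type) [AddCommSemigroup S] [Fintype S] : ℕ :=
  (Finset.univ : Finset S).lcm (fun a => period a)

/-- `κ(S) = ⌈|S| / exp(S)⌉ · exp(S)`. -/
noncomputable def kappa (S : Type) [AddCommSemigroup S] [Fintype S] : ℕ :=
  ((Fintype.card S + expS S - 1) / expS S) * expS S

/-- `E(S)`: the smallest positive integer `ℓ` such that every sequence `T` over `S` of
length at least `ℓ` contains a subsequence `T'` with `|T| - |T'| = κ(S)` and `σ(T') = σ(T)`. -/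
noncomputable def EC (S : Type) [AddCommSemigroup S] [Fintype S] : ℕ :=
  sInf {ℓ : ℕ | 0 < ℓ ∧ ∀ T : Multiset S, ℓ ≤ Multiset.card T →
    ∃ B : Multiset S, B ≤ T ∧ Multiset.card T - Multiset.card B = kappa S ∧ EqSum B T}

end EGZ

/-- A finite commutative semigroup `S` is elementary with respect to subsets `G` and `N`:
`S` is the disjoint union of `G` and `N`; `G` is (under the addition of `S`) an abelian
group whose identity element is an identity element of all of `S`; `N` is an ideal of `S`
and is a nilsemigroup whose zero element `z` is a zero element of all of `S`. -/
def IsElementary (S : Type) [AddCommSemigroup S] (G N : Set S) : Prop :=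
  (∀ x : S, x ∈ G ∨ x ∈ N) ∧ Disjoint G N ∧
  (∀ a ∈ G, ∀ b ∈ G, a + b ∈ G) ∧
  (∃ e ∈ G, (∀ a : S, e + a = a) ∧ ∀ a ∈ G, ∃ b ∈ G, a + b = e) ∧
  (∀ a ∈ N, ∀ s : S, a + s ∈ N) ∧
  (∃ z ∈ N, (∀ a : S, z + a = z) ∧ ∀ x ∈ N, ∃ n : ℕ, EGZ.rep x n = z)

namespace EGZ

section Sums

variable [AddCommSemigroup S]

-- The coercion in the body of `mSum` elaborates to a monadic lift `T >>= pure ∘ (↑)`, which none of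
-- the `Multiset.map` lemmas match.
theorem mSum_eq_sum_map (T : Multiset S) :
    mSum T = (T.map fun t : S => (t : WithZero S)).sum := by
  simp [mSum]

theorem mSum_cons (a : S) (T : Multiset S) : mSum (a ::ₘ T) = a + mSum T := by
  simp only [mSum_eq_sum_map, Multiset.map_cons, Multiset.sum_cons]

theorem mSum_add (A B : Multiset S) : mSum (A + B) = mSum A + mSum B := by
  simp only [mSum_eq_sum_map, Multiset.map_add, Multiset.sum_add]

theorem exists_mem_mSum_eq_coe (G : AddSubsemigroup S) {T : Multiset S} (hT : T ≠ 0)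
    (hTG : ∀ t ∈ T, t ∈ G) : ∃ g ∈ G, mSum T = (g : WithZero S) := by
  rw [mSum_eq_sum_map]
  refine Multiset.sum_induction_nonempty (fun x : WithZero S => ∃ g ∈ G, x = g) ?_
    (Multiset.map_eq_zero.not.mpr hT) ?_
  · rintro _ _ ⟨g, hg, rfl⟩ ⟨h, hh, rfl⟩
    exact ⟨g + h, G.add_mem hg hh, WithZero.coe_add g h⟩
  · intro x hx
    obtain ⟨t, ht, rfl⟩ := Multiset.mem_map.mp hx
    exact ⟨t, hTG t ht, rfl⟩

-- The summands `s`, `t` have to come from `S`: if `S` has an identity `e`, then `0 + e = e + e` in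
-- `WithZero S`, so elements of `S` need not be cancellable there.
theorem eq_of_coe_add_mSum_eq {W : Multiset S} (hW : ∀ w ∈ W, IsAddRightRegular w) {s t : S}
    (h : (s : WithZero S) + mSum W = t + mSum W) : s = t := by
  induction W using Multiset.induction_on generalizing s t with
  | empty => simpa [mSum] using h
  | cons w W ih =>
    rw [Multiset.forall_mem_cons] at hW
    rw [mSum_cons, ← add_assoc, ← add_assoc, ← WithZero.coe_add, ← WithZero.coe_add] at h
    exact hW.1 (ih hW.2 h)

end Sums

section Reducible

variable [AddCommSemigroup S]

theorem reducible_add_of_mSum_eq {A B : Multiset S} (hAB : A < B) (h : mSum A = mSum B)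
    (C : Multiset S) : Reducible (B + C) :=
  ⟨A + C, add_lt_add_left hAB C, Or.inl (by rw [mSum_add, mSum_add, h])⟩

theorem Reducible.exists_mSum_add_eq {T : Multiset S} (hT : Reducible T) :
    ∃ C ≤ T, C ≠ 0 ∧ mSum T + mSum C = mSum T := by
  obtain ⟨B, hBT, hsum⟩ := hT
  obtain ⟨C, rfl⟩ := Multiset.le_iff_exists_add.mp hBT.le
  have hC : C ≠ 0 := by
    rintro rfl
    exact hBT.ne (add_zero B).symm
  rcases hsum with heq | ⟨e, he, hsum⟩
  · exact ⟨C, Multiset.le_add_left C B, hC, by rw [← heq, ← mSum_add]; exact heq.symm⟩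
  · refine ⟨B + C, le_rfl, (hBT.trans_le' (Multiset.zero_le B)).ne', ?_⟩
    rcases hsum with ⟨-, hid⟩ | ⟨-, hzero⟩
    · rw [hid, ← WithZero.coe_add, he]
    · rw [hzero, add_zero]

theorem reducible_of_card_lt [Fintype S] {T : Multiset S} (hT : Fintype.card S < T.card) :
    Reducible T := by
  induction T using Quotient.inductionOn with | h l =>
  by_contra hirr
  let prefixSum : Fin (l.length + 1) → WithZero S := fun i => mSum (l.take i : Multiset S)
  have hinj : Function.Injective prefixSum := by
    refine Function.Injective.of_lt_imp_ne fun i j hij hsum => hirr ?_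
    have hle : (l.take i : Multiset S) ≤ l.take j :=
      (List.take_sublist_take_left hij.le).subperm
    have hne : (l.take i : Multiset S) ≠ l.take j := fun h => by
      have hlen := congrArg Multiset.card h
      simp only [Multiset.coe_card, List.length_take] at hlen
      omega
    have hred := reducible_add_of_mSum_eq (hle.lt_of_ne hne) hsum (l.drop j)
    rwa [Multiset.coe_add, List.take_append_drop] at hred
  have hcard : Fintype.card (Fin (l.length + 1)) ≤ Fintype.card (Option S) :=
    Fintype.card_le_of_injective prefixSum hinj
  rw [Fintype.card_fin, Fintype.card_option] at hcard
  exact hT.not_ge (Nat.le_of_succ_le_succ hcard)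

end Reducible

section Nil

variable [AddCommSemigroup S] {z x s : S}

theorem rep_add (a b : S) (n : ℕ) : rep (a + b) n = rep a n + rep b n := by
  induction n with
  | zero => rfl
  | succ n ih => rw [rep, rep, rep, ih, add_add_add_comm]

theorem add_rep_eq_self (h : s + x = s) (n : ℕ) : s + rep x n = s := by
  induction n with
  | zero => exact h
  | succ n ih => rw [rep, ← add_assoc, ih, h]

/-- `x` is nilpotent: some positive multiple of `x` is `z`, which stands for the zero element of
`S`. Being a zero element is not part of the definition. -/
def IsNil (z x : S) : Prop :=
  ∃ n : ℕ, rep x n = z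

theorem IsNil.add_right (hx : IsNil z x) (hz : ∀ a : S, z + a = z) (y : S) : IsNil z (x + y) := by
  obtain ⟨n, hn⟩ := hx
  exact ⟨n, by rw [rep_add, hn, hz]⟩

theorem IsNil.eq_of_add_eq_self (hx : IsNil z x) (hz : ∀ a : S, z + a = z) (h : s + x = s) :
    s = z := by
  obtain ⟨n, hn⟩ := hx
  rw [← add_rep_eq_self h n, hn, add_comm, hz]

theorem IsNil.eq_of_add_mSum_eq_self (hx : IsNil z x) (hz : ∀ a : S, z + a = z)
    {C : Multiset S} (hxC : x ∈ C) (h : (s : WithZero S) + mSum C = s) : s = z := by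
  obtain ⟨C, rfl⟩ := Multiset.exists_cons_of_mem hxC
  rw [mSum_cons] at h
  cases hC : mSum C with
  | zero =>
    rw [hC, add_zero, ← WithZero.coe_add, WithZero.coe_inj] at h
    exact hx.eq_of_add_eq_self hz h
  | coe y =>
    rw [hC, ← WithZero.coe_add, ← WithZero.coe_add, WithZero.coe_inj] at h
    exact (hx.add_right hz y).eq_of_add_eq_self hz h

theorem Reducible.exists_le_add_mSum_eq {A W : Multiset S} (hred : Reducible (A + W))
    (hz : ∀ a : S, z + a = z) (hA : ∀ a ∈ A, IsNil z a) (hs : mSum A = (s : WithZero S))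
    (hsz : s ≠ z) (hW : ∀ w ∈ W, IsAddRightRegular w) :
    ∃ C ≤ W, C ≠ 0 ∧ (s : WithZero S) + mSum C = s := by
  classical
  obtain ⟨C, hCle, hC, hsum⟩ := hred.exists_mSum_add_eq
  have hstab : (s : WithZero S) + mSum C = s := by
    obtain ⟨c, -, hc⟩ := exists_mem_mSum_eq_coe ⊤ hC fun _ _ => AddSubsemigroup.mem_top _
    rw [hc, ← WithZero.coe_add]
    refine congrArg _ (eq_of_coe_add_mSum_eq hW ?_)
    rw [WithZero.coe_add, add_right_comm, ← hc, ← hs, ← mSum_add, hsum]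
  refine ⟨C, ?_, hC, hstab⟩
  by_contra hCW
  obtain ⟨a, ha⟩ := Multiset.exists_mem_of_ne_zero (tsub_eq_zero_iff_le.not.mpr hCW)
  have haA : a ∈ A := Multiset.mem_of_le (tsub_le_iff_right.mpr hCle) ha
  have haC : a ∈ C := Multiset.mem_of_le tsub_le_self ha
  exact hsz ((hA a haA).eq_of_add_mSum_eq_self hz haC hstab)

end Nil

end EGZ

section Elementary

variable {S : Type} [AddCommSemigroup S] {G N : Set S}

theorem IsElementary.isAddRightRegular (hel : IsElementary S G N) {g : S} (hg : g ∈ G) :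
    IsAddRightRegular g := by
  obtain ⟨-, -, -, ⟨e, -, he, hinv⟩, -⟩ := hel
  obtain ⟨b, -, hgb⟩ := hinv g hg
  have hreg : IsAddRightRegular e := fun x y hxy => by
    simpa only [add_comm _ e, he] using hxy
  exact IsAddRightRegular.of_add (hgb ▸ hreg)

theorem IsElementary.isNil (hel : IsElementary S G N) {z : S} (hz : ∀ a : S, z + a = z) {x : S}
    (hx : x ∈ N) : EGZ.IsNil z x := by
  obtain ⟨-, -, -, -, -, z', -, hz', hnil⟩ := hel
  obtain rfl : z' = z := by rw [← hz' z, add_comm, hz]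
  exact hnil x hx

end Elementary

theorem davenport_ge_card_add_davenport_quotient_general {S : Type} [AddCommSemigroup S]
    (hS : ∃ ℓ : ℕ, ∀ T : Multiset S, ℓ ≤ Multiset.card T → EGZ.Reducible T)
    (G : AddSubsemigroup S) (hG : ∀ g ∈ G, IsAddRightRegular g)
    {z : S} (hz : ∀ a : S, z + a = z)
    {T₂ : Multiset S} (hT₂ : ∀ t ∈ T₂, EGZ.IsNil z t)
    {s₂ : S} (hs₂ : EGZ.mSum T₂ = (s₂ : WithZero S)) (hs₂z : s₂ ≠ z)
    {K : Set S} (hK : K = {g ∈ G | g + s₂ = s₂})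
    {DGK : ℕ}
    (hDGK : DGK = sInf {d : ℕ | ∀ W : Multiset S, (∀ w ∈ W, w ∈ G) →
      d ≤ Multiset.card W →
      ∃ B : Multiset S, B ≤ W ∧ B ≠ 0 ∧ ∃ k ∈ K, EGZ.mSum B = (k : WithZero S)}) :
    Multiset.card T₂ + DGK ≤ EGZ.DavC S := by
  have hred : ∀ T : Multiset S, EGZ.DavC S ≤ Multiset.card T → EGZ.Reducible T := Nat.sInf_mem hS
  have hstab : ∀ W : Multiset S, (∀ w ∈ W, w ∈ G) → EGZ.DavC S ≤ Multiset.card (T₂ + W) →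
      ∃ B ≤ W, B ≠ 0 ∧ (s₂ : WithZero S) + EGZ.mSum B = s₂ := fun W hWG hcard =>
    (hred _ hcard).exists_le_add_mSum_eq hz hT₂ hs₂ hs₂z fun w hw => hG w (hWG w hw)
  have hlt : Multiset.card T₂ < EGZ.DavC S := by
    by_contra! hle
    obtain ⟨B, hB, hB0, -⟩ := hstab 0 (by simp) (by rwa [add_zero])
    exact hB0 (Multiset.le_zero.mp hB)
  suffices hDGK_le : DGK ≤ EGZ.DavC S - Multiset.card T₂ by omega
  rw [hDGK]
  refine Nat.sInf_le fun W hWG hcard => ?_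
  obtain ⟨B, hBW, hB0, hB⟩ := hstab W hWG (by rw [Multiset.card_add]; omega)
  obtain ⟨g, hg, hBg⟩ :=
    EGZ.exists_mem_mSum_eq_coe G hB0 fun b hb => hWG b (Multiset.mem_of_le hBW hb)
  rw [hBg, ← WithZero.coe_add, WithZero.coe_inj, add_comm] at hB
  exact ⟨B, hBW, hB0, g, hK ▸ ⟨hg, hB⟩, hBg⟩

/-- Let `S = G ∪ N` be a finite elementary semigroup with zero element
`z`, let `T₂` be a nonempty sequence over `N` with sum `s₂ = σ(T₂) ≠ ∞_S = z`, and let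
`K = {g ∈ G : g + s₂ = s₂}` be the stabilizer of `s₂` in `G`.  Then
`D(S) ≥ |T₂| + D(G/K)`, where the Davenport constant `D(G/K)` of the quotient group `G/K`
is expressed by its classical coset characterization: the smallest `d` such that every
sequence of at least `d` elements of `G` contains a nonempty subsequence whose sum lies
in `K` (a sequence over `G/K` has zero sum iff a lift of it has sum in `K`). -/
theorem davenport_ge_card_add_davenport_quotient (S : Type) [AddCommSemigroup S] [Fintype S]
    (G N : Set S) (hel : IsElementary S G N)
    (z : S) (hzN : z ∈ N) (hz : ∀ a : S, z + a = z)
    (T₂ : Multiset S) (hT₂ne : T₂ ≠ 0) (hT₂N : ∀ t ∈ T₂, t ∈ N)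
    (s₂ : S) (hs₂ : EGZ.mSum T₂ = (s₂ : WithZero S)) (hs₂z : s₂ ≠ z)
    (K : Set S) (hK : K = {g ∈ G | g + s₂ = s₂})
    (DGK : ℕ)
    (hDGK : DGK = sInf {d : ℕ | ∀ W : Multiset S, (∀ w ∈ W, w ∈ G) →
      d ≤ Multiset.card W →
      ∃ B : Multiset S, B ≤ W ∧ B ≠ 0 ∧ ∃ k ∈ K, EGZ.mSum B = (k : WithZero S)}) :
    Multiset.card T₂ + DGK ≤ EGZ.DavC S :=
  davenport_ge_card_add_davenport_quotient_general
    ⟨Fintype.card S + 1, fun _ hT => EGZ.reducible_of_card_lt hT⟩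
    ⟨G, fun ha hb => hel.2.2.1 _ ha _ hb⟩ (fun _ => hel.isAddRightRegular) hz
    (fun t ht => hel.isNil hz (hT₂N t ht)) hs₂ hs₂z hK hDGK
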